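/- Let a, b be integers, p a prime with p not dividing b, and B a positive integer with B < p. Then the following are equivalent: (1) for every j with 1 ≤ j ≤ B, the Legendre symbol ((a²-jb)/p) ≠ 1; (2) B ≤ p - 1 - max T, where T is the set of s ∈ {0,1,...,p-1} such that there exists an integer x with x not divisible by p and x² ≡ a² + s·b (mod p). -/

import Mathlib

/-!
Modulo `p`, replacing `j` by `p - j` turns `a² - jb` into `a² + (p - j)b`. Condition (1) therefore
says that none of the `B` largest elements `p - B, …, p - 1` of `{0, …, p - 1}` lies in `T`, that
is, `max T ≤ p - 1 - B`.
-/

theorem legendreSym_eq_one_iff_exists_sq_eq (p : ℕ) [Fact p.Prime] (m : ℤ) :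
    legendreSym p m = 1 ↔ ∃ x : ℤ, ¬ (p : ℤ) ∣ x ∧ ((x ^ 2 : ℤ) : ZMod p) = (m : ZMod p) := by
  constructor
  · intro h
    have hm : (m : ZMod p) ≠ 0 := fun hm ↦
      zero_ne_one (((legendreSym.eq_zero_iff p m).2 hm).symm.trans h)
    obtain ⟨y, hy⟩ := (legendreSym.eq_one_iff p hm).1 h
    obtain ⟨x, rfl⟩ := ZMod.intCast_surjective y
    refine ⟨x, fun hpx ↦ hm ?_, by rw [hy, Int.cast_pow, sq]⟩
    rw [hy, (ZMod.intCast_zmod_eq_zero_iff_dvd x p).2 hpx, mul_zero]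
  · rintro ⟨x, hpx, hx⟩
    have hx0 : (x : ZMod p) ≠ 0 := mt (ZMod.intCast_zmod_eq_zero_iff_dvd x p).1 hpx
    calc
      legendreSym p m = legendreSym p (x ^ 2) := by rw [legendreSym, legendreSym, hx]
      _ = 1 := legendreSym.sq_one' p hx0

theorem legendreSym_sub_natCast_mul {p : ℕ} [Fact p.Prime] (c b : ℤ) {j : ℕ} (hj : j ≤ p) :
    legendreSym p (c - j * b) = legendreSym p (c + (p - j : ℕ) * b) := by
  have hcast : ((c - j * b : ℤ) : ZMod p) = ((c + (p - j : ℕ) * b : ℤ) : ZMod p) := by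
    push_cast [Nat.cast_sub hj, ZMod.natCast_self]
    ring
  rw [legendreSym, legendreSym, hcast]

theorem le_sub_one_sub_sSup_iff {T : Set ℕ} {n B : ℕ} (hT : ∀ s ∈ T, s < n) (hB : B < n) :
    B ≤ n - 1 - sSup T ↔ ∀ j, 1 ≤ j → j ≤ B → n - j ∉ T := by
  have hub : n - 1 ∈ upperBounds T := fun s hs ↦ Nat.le_sub_one_of_lt (hT s hs)
  have hsup : sSup T ≤ n - 1 := csSup_le' hub
  calc
    B ≤ n - 1 - sSup T ↔ sSup T ≤ n - 1 - B := by lia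
    _ ↔ ∀ s ∈ T, s ≤ n - 1 - B := csSup_le_iff' ⟨n - 1, hub⟩
    _ ↔ ∀ j, 1 ≤ j → j ≤ B → n - j ∉ T := by
      constructor
      · intro hle j _ hjB hmem
        have := hle _ hmem
        lia
      · intro hnot s hs
        have hsn := hT s hs
        by_contra! hlt
        refine hnot (n - s) (by lia) (by lia) ?_
        rwa [Nat.sub_sub_self hsn.le]

/-- Equivalence of the non-quadratic-residue condition with the bound on `B`
by `p - 1 - max T`. -/
theorem legendre_condition_equiv (a b : ℤ) (p : ℕ) [Fact p.Prime]
    (hb : ¬ (p : ℤ) ∣ b) (B : ℕ) (hB : 1 ≤ B) (hBp : B < p) :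
    (∀ j : ℕ, 1 ≤ j → j ≤ B → legendreSym p (a ^ 2 - j * b) ≠ 1) ↔
      B ≤ p - 1 - sSup {s : ℕ | s < p ∧
        ∃ x : ℤ, ¬ (p : ℤ) ∣ x ∧
          ((x ^ 2 : ℤ) : ZMod p) = ((a ^ 2 + s * b : ℤ) : ZMod p)} := by
  simp only [← legendreSym_eq_one_iff_exists_sq_eq]
  rw [le_sub_one_sub_sSup_iff (fun s hs ↦ hs.1) hBp]
  refine forall₃_congr fun j hj hjB ↦ not_congr ?_
  have hlt : p - j < p := by lia
  rw [legendreSym_sub_natCast_mul _ _ (hjB.trans hBp.le), Set.mem_ofPred_eq, and_iff_right hlt]
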